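/- In the uniform-price knapsack auction, truthful bidding weakly dominates underbidding: fix the per-unit bids of all bidders other than i (pairwise distinct, and distinct from the bids of i considered). For any per-unit bid b_i'' < v_i/k_i, the utility bidder i obtains by bidding v_i/k_i is at least the utility obtained by bidding b_i'', for every profile of the other bidders' bids. -/

import Mathlib

/-! Write `S b j` for the total size of the objects whose per-unit bid is at least `b j`. Sizes being
positive, `j` is packed exactly when `S b j ≤ K`, so packing is monotone in the bid, and since not
everything fits, the lowest bidder always loses: the highest losing bid is a genuine maximum.

If underbidding packs `i`, then raising `i`'s bid keeps `i` packed. Every bidder who loses under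
the truthful bid has a bid below `b'` (bidders above `b'` sit in a prefix that fits) and so
still loses under `b'` with the same bid; hence the price under truthful bidding is at most
the price under underbidding. If underbidding does not pack `i`, it yields `0`, while the truthful
bid yields a nonnegative utility: either `i` loses, or every loser bids below `v / k i`, so the
payment is at most `v`. -/

open Finset
open scoped Classical

noncomputable section

/-- `packs K k b i` : bidder `i`'s object is packed by the Greedy algorithm when the
knapsack has capacity `K`, objects have sizes `k`, and bidders submit the (pairwise
distinct) per-unit bids `b`.  The Greedy algorithm orders bidders by strictly decreasing
per-unit bid and fills the knapsack until the next object in line does not fit, so `i`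
is packed iff every prefix of the bid-decreasing order ending at a bidder `j` with
`b j ≥ b i` fits into the knapsack. -/
def packs {n : ℕ} (K : ℝ) (k b : Fin n → ℝ) (i : Fin n) : Prop :=
  ∀ j : Fin n, b i ≤ b j → ∑ l ∈ univ.filter (fun l => b j ≤ b l), k l ≤ K

/-- The highest losing per-unit bid (`b_{m+1}` in the paper): the largest per-unit bid
among bidders whose object is not packed by the Greedy algorithm. -/
def highestLosingBid {n : ℕ} (K : ℝ) (k b : Fin n → ℝ) : ℝ :=
  if h : (univ.filter (fun j => ¬ packs K k b j)).Nonempty then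
    (univ.filter (fun j => ¬ packs K k b j)).sup' h b
  else 0

/-- Bidder `i`'s utility in the uniform-price (UP) knapsack auction when `i`'s value is
`v` : if `i`'s object is packed, `i` realizes `v` and pays `k i` times the highest
losing per-unit bid; otherwise `i` gets `0`. -/
def upUtility {n : ℕ} (K : ℝ) (k : Fin n → ℝ) (v : ℝ) (b : Fin n → ℝ) (i : Fin n) : ℝ :=
  if packs K k b i then v - k i * highestLosingBid K k b else 0

theorem packs_iff {n : ℕ} {K : ℝ} {k : Fin n → ℝ} (hk : ∀ i, 0 < k i) (b : Fin n → ℝ)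
    (i : Fin n) :
    packs K k b i ↔ ∑ l ∈ univ.filter (fun l => b i ≤ b l), k l ≤ K := by
  refine ⟨fun h => h i le_rfl, fun h j hj => le_trans ?_ h⟩
  refine sum_le_sum_of_subset_of_nonneg ?_ (fun l _ _ => (hk l).le)
  exact monotone_filter_right _ (fun l _ hl => hj.trans hl)

/-- Comparison of two bid profiles: if everyone bidding at least `c j` under `c` bids at least
`b i` under `b`, then `j` is packed under `c` as soon as `i` is packed under `b`. -/
theorem packs_of_imp {n : ℕ} {K : ℝ} {k : Fin n → ℝ} (hk : ∀ i, 0 < k i) {b c : Fin n → ℝ}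
    {i j : Fin n} (h : packs K k b i) (hsub : ∀ l, c j ≤ c l → b i ≤ b l) :
    packs K k c j := by
  rw [packs_iff hk] at h ⊢
  refine le_trans (sum_le_sum_of_subset_of_nonneg ?_ (fun l _ _ => (hk l).le)) h
  exact monotone_filter_right _ (fun l _ hl => hsub l hl)

/-- Since the objects do not all fit, the lowest bidder loses. -/
theorem exists_not_packs {n : ℕ} {K : ℝ} {k : Fin n → ℝ} (hsum : K < ∑ i, k i) (i : Fin n)
    (b : Fin n → ℝ) : ∃ j, ¬ packs K k b j := by
  obtain ⟨j, -, hj⟩ := exists_min_image univ b ⟨i, mem_univ i⟩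
  refine ⟨j, fun h => ?_⟩
  have h' := h j le_rfl
  rw [filter_true_of_mem (fun l hl => hj l hl)] at h'
  exact absurd h' (not_le.mpr hsum)

theorem le_highestLosingBid {n : ℕ} {K : ℝ} {k b : Fin n → ℝ} {j : Fin n}
    (hj : ¬ packs K k b j) : b j ≤ highestLosingBid K k b := by
  have hm : j ∈ univ.filter (fun j => ¬ packs K k b j) := by simpa using hj
  rw [highestLosingBid, dif_pos ⟨j, hm⟩]
  exact le_sup' b hm

theorem highestLosingBid_le {n : ℕ} {K : ℝ} {k b : Fin n → ℝ} {c : ℝ}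
    (hne : ∃ j, ¬ packs K k b j) (h : ∀ j, ¬ packs K k b j → b j ≤ c) :
    highestLosingBid K k b ≤ c := by
  obtain ⟨j, hj⟩ := hne
  have hm : j ∈ univ.filter (fun j => ¬ packs K k b j) := by simpa using hj
  rw [highestLosingBid, dif_pos ⟨j, hm⟩]
  exact sup'_le _ _ (fun l hl => h l (by simpa using hl))

/-- **In the UP knapsack auction, truthful bidding weakly dominates underbidding.**
Fix the per-unit bids of all bidders other than `i` (pairwise distinct, and distinct
from the two bids of `i` considered).  For any per-unit bid `b' < v / k i`, bidding the
truthful per-unit bid `v / k i` yields bidder `i` at least as much utility as bidding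
`b'`, for every profile `b` of the other bidders' bids. -/
theorem up_truthful_dominates_underbidding {n : ℕ} (K : ℝ) (k : Fin n → ℝ)
    (hK : 0 < K) (hk : ∀ i, 0 < k i) (hkK : ∀ i, k i < K) (hsum : K < ∑ i, k i)
    (i : Fin n) (v : ℝ) (hv : 0 ≤ v) (b : Fin n → ℝ) (b' : ℝ)
    (hunder : b' < v / k i)
    (hinjT : Function.Injective (Function.update b i (v / k i)))
    (hinjD : Function.Injective (Function.update b i b')) :
    upUtility K k v (Function.update b i b') i
      ≤ upUtility K k v (Function.update b i (v / k i)) i := by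
  have hki := hk i
  set T := Function.update b i (v / k i) with hT
  set D := Function.update b i b' with hD
  have hTi : T i = v / k i := by simp [hT]
  have hDi : D i = b' := by simp [hD]
  have hne : ∀ l, l ≠ i → T l = D l := fun l hl => by simp [hT, hD, hl]
  have hex := exists_not_packs hsum i T
  by_cases hp : packs K k D i
  · have hpT : packs K k T i := packs_of_imp hk hp fun l hl => by
      by_cases hli : l = i
      · rw [hli]
      · rw [← hne l hli, hDi]; linarith
    rw [upUtility, upUtility, if_pos hp, if_pos hpT]
    have hle : highestLosingBid K k T ≤ highestLosingBid K k D := by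
      refine highestLosingBid_le hex fun j hj => ?_
      have hji : j ≠ i := fun h => hj (h ▸ hpT)
      have hlt : T j < b' := by
        by_contra! hge
        refine hj (packs_of_imp hk hp fun l hl => ?_)
        by_cases hli : l = i
        · rw [hli]
        · rw [← hne l hli, hDi]; linarith
      rw [hne j hji]
      refine le_highestLosingBid fun hjD => hj (packs_of_imp hk hjD fun l hl => ?_)
      rw [← hne j hji]
      by_cases hli : l = i
      · rw [hli, hDi]; exact hlt.le
      · rw [← hne l hli]; exact hl
    have := mul_le_mul_of_nonneg_left hle hki.le
    linarith
  · rw [upUtility, upUtility, if_neg hp]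
    split_ifs with hpT
    · have hle : highestLosingBid K k T ≤ v / k i := by
        refine highestLosingBid_le hex fun j hj => ?_
        by_contra! hgt
        exact hj (packs_of_imp hk hpT fun l hl => by rw [hTi]; linarith)
      have := mul_le_mul_of_nonneg_left hle hki.le
      rw [mul_div_cancel₀ v hki.ne'] at this
      linarith
    · exact le_rfl
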